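/- Let q be a prime power and let k, v, r be integers with 2 ≤ k, 3k ≤ v, r ≡ v (mod k), 0 ≤ r < k, and (q^r − 1)/(q − 1) < k. Then A_q(v, 2k; k) = q^{v−k} + A_q(v−k, 2k; k), and this maximum is attained by a (v, A_q(v,2k;k), 2k; k)_q constant dimension code containing a (v,2k;k)_q lifted MRD code. -/

import Mathlib

open Module

/-- The subspace of `F_q^v` of vectors whose first `k` coordinates vanish
(denoted `Γ` in the paper); its complement (as a set of vectors) is `Δ`. -/
def Gamma (K : Type) [Field K] (k v : ℕ) : Submodule K (Fin v → K) where
  carrier := {x | ∀ j : Fin v, (j : ℕ) < k → x j = 0}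
  add_mem' := by
    intro a b ha hb j hj
    simp [ha j hj, hb j hj]
  zero_mem' := by
    intro j hj
    rfl
  smul_mem' := by
    intro c x hx j hj
    simp [hx j hj]

/-- The subspace distance `d_S(U,W) = dim(U+W) - dim(U ∩ W)`. -/
noncomputable def sDist {K : Type} [Field K] {v : ℕ}
    (U W : Submodule K (Fin v → K)) : ℕ :=
  finrank K ↥(U ⊔ W) - finrank K ↥(U ⊓ W)

/-- A constant dimension code of dimension `k` and minimum subspace distance `d`. -/
def IsCDC (K : Type) [Field K] (v : ℕ) (d k : ℤ)
    (C : Set (Submodule K (Fin v → K))) : Prop :=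
  (∀ U ∈ C, (finrank K U : ℤ) = k) ∧
  ∀ U ∈ C, ∀ W ∈ C, U ≠ W → d ≤ (sDist U W : ℤ)

/-- `A_q(v,d;k)`: the maximum cardinality of a `(v,M,d;k)_q` CDC. -/
noncomputable def Amax (K : Type) [Field K] (v : ℕ) (d k : ℤ) : ℕ :=
  sSup {n | ∃ C : Set (Submodule K (Fin v → K)), IsCDC K v d k C ∧ C.ncard = n}

/-- Row `i` of the `k × v` matrix `(I_k | A)`. -/
def liftRow {K : Type} [Field K] {k v : ℕ} (A : Matrix (Fin k) (Fin (v - k)) K)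
    (i : Fin k) : Fin v → K := fun j =>
  if (j : ℕ) < k then (if (i : ℕ) = (j : ℕ) then 1 else 0)
  else if h2 : (j : ℕ) - k < v - k then A i ⟨(j : ℕ) - k, h2⟩ else 0

/-- `M` is a `(v,d;k)_q` lifted MRD code: `M = { rowspan (I_k | A) : A ∈ R }`
for a `[k × (v-k), q^((v-k)(k-d/2+1)), d/2]_q` rank metric code `R`. -/
def IsLMRD (q : ℕ) (K : Type) [Field K] (v d k : ℕ)
    (M : Set (Submodule K (Fin v → K))) : Prop :=
  ∃ R : Set (Matrix (Fin k) (Fin (v - k)) K),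
    R.ncard = q ^ ((v - k) * (k - d / 2 + 1)) ∧
    (∀ A ∈ R, ∀ B ∈ R, A ≠ B → d / 2 ≤ (A - B).rank) ∧
    M = {U | ∃ A ∈ R, U = Submodule.span K (Set.range (liftRow A))}

/-- The Gaussian binomial coefficient `[a choose b]_q`, defined to be `0`
unless `0 ≤ b ≤ a`. -/
noncomputable def qBin (q : ℕ) (a b : ℤ) : ℚ :=
  if 0 ≤ b ∧ b ≤ a then
    ∏ i ∈ Finset.range b.toNat,
      ((q : ℚ) ^ a - (q : ℚ) ^ (i : ℤ)) / ((q : ℚ) ^ b - (q : ℚ) ^ (i : ℤ))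
  else 0

/-- `[[w, u; c]]_q = q^(u*c) * [w-u choose c]_q` for `0 ≤ c ≤ w-u`, else `0`. -/
noncomputable def qBinD (q : ℕ) (w u c : ℤ) : ℚ :=
  if 0 ≤ c ∧ c ≤ w - u then (q : ℚ) ^ (u * c) * qBin q (w - u) c else 0


/-- The nonzero vectors covered by no member of a family of subspaces. -/
def holes {K W ι : Type*} [Field K] [AddCommGroup W] [Module K W]
    (U : ι → Submodule K W) : Set W := {x | x ≠ 0 ∧ ∀ i, x ∉ U i}

lemma ncard_holes_comap_ker {K W ι : Type*} [Field K] [AddCommGroup W] [Module K W]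
    (U : ι → Submodule K W) (φ : Dual K W) :
    (holes fun i => (U i).comap (LinearMap.ker φ).subtype).ncard =
      {x ∈ holes U | φ x = 0}.ncard := by
  rw [← Set.ncard_image_of_injective _ (LinearMap.ker φ).injective_subtype]
  congr 1
  ext x
  simp only [holes, Set.mem_image, Set.mem_ofPred_eq, Submodule.mem_comap,
    Submodule.subtype_apply]
  constructor
  · rintro ⟨y, ⟨h0, h⟩, rfl⟩
    exact ⟨⟨by simpa using h0, h⟩, y.2⟩
  · rintro ⟨⟨h0, h⟩, hx⟩
    exact ⟨⟨x, hx⟩, ⟨by simpa [Subtype.ext_iff] using h0, h⟩, rfl⟩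

lemma finrank_comap_ker_add_one_ge {K W : Type*} [Field K] [AddCommGroup W] [Module K W]
    [FiniteDimensional K W] (U : Submodule K W) (φ : Dual K W)
    (hφ : φ ≠ 0) : finrank K U ≤ finrank K (U.comap (LinearMap.ker φ).subtype) + 1 := by
  have h1 : finrank K (U.comap (LinearMap.ker φ).subtype) =
      finrank K ↥(LinearMap.ker φ ⊓ U) := by
    rw [← Submodule.map_comap_subtype]
    exact (LinearEquiv.finrank_eq (Submodule.equivMapOfInjective _
      (LinearMap.ker φ).injective_subtype _))
  have h2 := Submodule.finrank_sup_add_finrank_inf_eq (LinearMap.ker φ) U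
  have h3 := Module.Dual.finrank_ker_add_one_of_ne_zero hφ
  have h4 := Submodule.finrank_le (LinearMap.ker φ ⊔ U)
  omega

section Holes

variable {K : Type*} [Field K] [Fintype K] {W ι : Type*} [AddCommGroup W] [Module K W]

lemma ncard_nonzero [Finite W] (U : Submodule K W) :
    (((U : Set W) \ {0}).ncard : ℤ) = (Fintype.card K : ℤ) ^ finrank K U - 1 := by
  have h1 : ((U : Set W) \ {0}).ncard + 1 = (U : Set W).ncard :=
    Set.ncard_sdiff_singleton_add_one U.zero_mem (Set.toFinite _)
  have h2 : (U : Set W).ncard = Fintype.card K ^ finrank K U := by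
    rw [← Nat.card_coe_set_eq, ← Nat.card_eq_fintype_card]
    exact Module.natCard_eq_pow_finrank
  rw [h2] at h1
  rw [eq_sub_iff_add_eq]
  exact_mod_cast h1

/-- Counting the nonzero vectors of the ambient space. -/
lemma card_eq_holes_add_sum [Finite W] [Fintype ι] (U : ι → Submodule K W)
    (hU : Pairwise (Function.onFun Disjoint U)) :
    (Fintype.card K : ℤ) ^ finrank K W - 1 =
      (holes U).ncard + ∑ i, ((Fintype.card K : ℤ) ^ finrank K (U i) - 1) := by
  have huniv : ((⊤ : Submodule K W) : Set W) \ {0} =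
      holes U ∪ ⋃ i, ((U i : Set W) \ {0}) := by
    ext x
    simp only [holes, Submodule.top_coe, Set.mem_sdiff, Set.mem_univ, true_and,
      Set.mem_singleton_iff, Set.mem_union, Set.mem_ofPred_eq, Set.mem_iUnion, SetLike.mem_coe]
    by_cases hx : ∃ i, x ∈ U i
    · obtain ⟨i, hi⟩ := hx
      refine ⟨fun h => Or.inr ⟨i, hi, h⟩, ?_⟩
      rintro (h | ⟨_, h⟩)
      exacts [h.1, h.2]
    · push Not at hx
      simp [hx]
  have hdisj : Disjoint (holes U) (⋃ i, ((U i : Set W) \ {0})) := by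
    rw [Set.disjoint_left]
    intro x hx hx'
    obtain ⟨i, hi⟩ := Set.mem_iUnion.1 hx'
    exact hx.2 i hi.1
  have hpair : Pairwise (Function.onFun Disjoint fun i => ((U i : Set W) \ {0})) := by
    intro i j hij
    refine Set.disjoint_left.2 fun x hx hx' => hx.2 ?_
    exact Submodule.disjoint_def.1 (hU hij) x hx.1 hx'.1
  have h := ncard_nonzero (⊤ : Submodule K W)
  rw [huniv, Set.ncard_union_eq hdisj, finrank_top,
    Set.ncard_iUnion_of_finite (fun _ => Set.toFinite _) hpair,
    finsum_eq_sum_of_fintype] at h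
  rw [← h]
  push_cast
  simp_rw [ncard_nonzero]

/-- Some hyperplane contains at most the average share of a set of nonzero vectors. -/
lemma exists_dual_mul_ncard_le [Finite W] [Nontrivial W] (T : Set W) (hT : (0 : W) ∉ T) :
    ∃ φ : Dual K W, φ ≠ 0 ∧ Fintype.card K * {x ∈ T | φ x = 0}.ncard ≤ T.ncard := by
  classical
  have := Fintype.ofFinite W
  have : Finite (Dual K W) := Module.finite_of_finite K
  have := Fintype.ofFinite (Dual K W)
  have hker (x : W) (hx : x ≠ 0) : Fintype.card K * {φ : Dual K W | φ x = 0}.ncard =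
      Fintype.card (Dual K W) := by
    have hne : Dual.eval K W x ≠ 0 := fun h =>
      hx ((Module.forall_dual_apply_eq_zero_iff K x).1 fun φ => LinearMap.congr_fun h φ)
    have h1 := Module.Dual.finrank_ker_add_one_of_ne_zero hne
    have h2 : {φ : Dual K W | φ x = 0}.ncard =
        Fintype.card K ^ finrank K (LinearMap.ker (Dual.eval K W x)) := by
      rw [← Nat.card_eq_fintype_card, ← Nat.card_coe_set_eq]
      exact Module.natCard_eq_pow_finrank (K := K) (V := LinearMap.ker (Dual.eval K W x))
    rw [h2, ← pow_succ', h1, Module.card_eq_pow_finrank (K := K) (V := Dual K W)]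
  have hsum : ∑ φ : Dual K W, Fintype.card K * (T.toFinset.filter fun x => φ x = 0).card =
      ∑ φ : Dual K W, T.toFinset.card := by
    rw [← Finset.mul_sum]
    simp_rw [Finset.card_filter]
    rw [Finset.sum_comm, Finset.mul_sum, Finset.sum_const, Finset.card_univ, smul_eq_mul,
      mul_comm, ← smul_eq_mul, ← Finset.sum_const]
    refine Finset.sum_congr rfl fun x hx => ?_
    rw [← Finset.card_filter, ← Set.ncard_coe_finset, Finset.coe_filter_univ]
    exact hker x fun h => hT (h ▸ Set.mem_toFinset.1 hx)
  have hcard (φ : Dual K W) : {x ∈ T | φ x = 0}.ncard = (T.toFinset.filter fun x => φ x = 0).card := by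
    rw [← Set.ncard_coe_finset]
    simp
  by_contra! hcon
  obtain ⟨φ, hφ⟩ := exists_ne (0 : Dual K W)
  refine hsum.not_gt (Finset.sum_lt_sum (fun ψ _ => ?_) ⟨φ, Finset.mem_univ _, ?_⟩)
  · rcases eq_or_ne ψ 0 with rfl | hψ
    · simpa using Nat.le_mul_of_pos_left _ Fintype.card_pos
    · have := hcon ψ hψ
      rw [hcard, Set.ncard_eq_toFinset_card'] at this
      exact this.le
  · have := hcon φ hφ
    rwa [hcard, Set.ncard_eq_toFinset_card'] at this

/-- The number of holes is determined modulo `(q - 1) q ^ e`. -/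
lemma exists_holes_eq [Finite W] [Fintype ι] (U : ι → Submodule K W)
    (hU : Pairwise (Function.onFun Disjoint U)) (e : ℕ) (he : ∀ i, e ≤ finrank K (U i))
    (heW : e ≤ finrank K W) (hι : (Fintype.card K : ℤ) ^ e ∣ Fintype.card ι - 2) :
    ∃ c : ℤ, ((holes U).ncard : ℤ) =
      (Fintype.card K - 1) * c * (Fintype.card K : ℤ) ^ e - ((Fintype.card K : ℤ) ^ e - 1) := by
  have h := card_eq_holes_add_sum U hU
  set q := (Fintype.card K : ℤ)
  have hco : IsCoprime (q - 1) (q ^ e) :=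
    IsCoprime.pow_right ⟨-1, 1, by ring⟩
  have hgeom (n : ℕ) : q - 1 ∣ q ^ n - 1 := by simpa using sub_dvd_pow_sub_pow q 1 n
  have hd1 : q - 1 ∣ (holes U).ncard + (q ^ e - 1) := by
    rw [eq_sub_of_add_eq h.symm]
    exact ((hgeom _).sub (Finset.dvd_sum fun i _ => hgeom _)).add (hgeom _)
  have hd2 : q ^ e ∣ (holes U).ncard + (q ^ e - 1) := by
    have : ((holes U).ncard : ℤ) + (q ^ e - 1) = q ^ finrank K W + (Fintype.card ι - 2) + q ^ e
        - ∑ i, q ^ finrank K (U i) := by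
      rw [Finset.sum_sub_distrib] at h
      simp at h
      linarith
    rw [this]
    exact (((pow_dvd_pow _ heW).add hι).add dvd_rfl).sub
      (Finset.dvd_sum fun i _ => pow_dvd_pow _ (he i))
  obtain ⟨c, hc⟩ := hco.mul_dvd hd1 hd2
  exact ⟨c, by linarith⟩

end Holes

/-- A family of pairwise disjoint subspaces with the right residue cannot have few holes. -/
lemma holes_bound {K : Type*} [Field K] [Fintype K] {ι : Type*} [Fintype ι] (c : ℕ) :
    ∀ {W : Type*} [AddCommGroup W] [Module K W] [Finite W] (U : ι → Submodule K W)
      (_ : Pairwise (Function.onFun Disjoint U)) (e : ℕ) (_ : ∀ i, e ≤ finrank K (U i))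
      (_ : e ≤ finrank K W) (_ : (Fintype.card K : ℤ) ^ e ∣ Fintype.card ι - 2) (_ : c < e),
      ((Fintype.card K : ℤ) - 1) * c * (Fintype.card K : ℤ) ^ e -
        ((Fintype.card K : ℤ) ^ e - 1) < (holes U).ncard := by
  have hq : (1 : ℤ) < Fintype.card K := by exact_mod_cast Fintype.one_lt_card
  induction c with
  | zero =>
    intro W _ _ _ U hU e he heW hι hc
    have := one_lt_pow₀ hq hc.ne'
    push_cast
    have := Int.natCast_nonneg (holes U).ncard
    linarith
  | succ c ih =>
    intro W _ _ _ U hU e he heW hι hc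
    obtain ⟨e, rfl⟩ : ∃ e', e = e' + 1 := ⟨e - 1, by omega⟩
    have : Nontrivial W := Module.nontrivial_of_finrank_pos (R := K) (by omega)
    obtain ⟨φ, hφ, hle⟩ := exists_dual_mul_ncard_le (K := K) (holes U) fun h => h.1 rfl
    rw [← ncard_holes_comap_ker] at hle
    have hU' : Pairwise (Function.onFun Disjoint
        fun i => (U i).comap (LinearMap.ker φ).subtype) := by
      intro i j hij
      refine Submodule.disjoint_def.2 fun x hx hx' => ?_
      exact Subtype.ext (Submodule.disjoint_def.1 (hU hij) x hx hx')
    have he' (i : ι) : e ≤ finrank K ((U i).comap (LinearMap.ker φ).subtype) := by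
      have := finrank_comap_ker_add_one_ge (U i) φ hφ
      have := he i
      omega
    have heW' : e ≤ finrank K (LinearMap.ker φ) := by
      have := Module.Dual.finrank_ker_add_one_of_ne_zero hφ
      omega
    have hι' := (pow_dvd_pow (Fintype.card K : ℤ) e.le_succ).trans hι
    have hlt := ih _ hU' e he' heW' hι' (by omega)
    obtain ⟨d, hd⟩ := exists_holes_eq _ hU' e he' heW' hι'
    have hle' : (Fintype.card K : ℤ) *
        (holes fun i => (U i).comap (LinearMap.ker φ).subtype).ncard ≤ (holes U).ncard := by
      exact_mod_cast hle
    set q := (Fintype.card K : ℤ)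
    rw [hd] at hlt hle'
    have hqe : 0 < q ^ e := by positivity
    have hcd : (c : ℤ) < d := by
      have : (q - 1) * q ^ e * c < (q - 1) * q ^ e * d := by linarith
      exact lt_of_mul_lt_mul_left this (by have : 0 < q - 1 := by linarith
                                           positivity)
    have hmul : (q - 1) * q ^ (e + 1) * ((c : ℤ) + 1) ≤ (q - 1) * q ^ (e + 1) * d :=
      mul_le_mul_of_nonneg_left hcd (by have : 0 < q - 1 := by linarith
                                        positivity)
    push_cast
    rw [pow_succ] at hmul ⊢
    nlinarith

/-- Distance `2k` between `k`-dimensional subspaces means trivial intersection. -/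
lemma isCDC_iff_pairwise_disjoint {K : Type} [Field K] {v k : ℕ}
    {C : Set (Submodule K (Fin v → K))} :
    IsCDC K v (2 * (k : ℤ)) k C ↔ (∀ U ∈ C, finrank K U = k) ∧ C.Pairwise Disjoint := by
  have key {U W : Submodule K (Fin v → K)} (hU : finrank K U = k) (hW : finrank K W = k) :
      2 * (k : ℤ) ≤ sDist U W ↔ Disjoint U W := by
    have h := Submodule.finrank_sup_add_finrank_inf_eq U W
    rw [disjoint_iff, ← Submodule.finrank_eq_zero (R := K), sDist]
    omega
  unfold IsCDC
  norm_cast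
  refine and_congr_right fun hC => forall₂_congr fun U hU => forall₂_congr fun W hW => ?_
  exact forall_congr' fun _ => mod_cast key (hC U hU) (hC W hW)

section Amax

variable {K : Type} [Field K] [Fintype K] {v : ℕ} {d k : ℤ}

lemma bddAbove_ncard_isCDC :
    BddAbove {n | ∃ C : Set (Submodule K (Fin v → K)), IsCDC K v d k C ∧ C.ncard = n} := by
  refine ⟨Nat.card (Submodule K (Fin v → K)), ?_⟩
  rintro _ ⟨C, -, rfl⟩
  exact Set.ncard_le_card C

lemma IsCDC.ncard_le_Amax {C : Set (Submodule K (Fin v → K))} (hC : IsCDC K v d k C) :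
    C.ncard ≤ Amax K v d k :=
  le_csSup bddAbove_ncard_isCDC ⟨C, hC, rfl⟩

variable (K v d k) in
lemma exists_isCDC_ncard_eq_Amax :
    ∃ C : Set (Submodule K (Fin v → K)), IsCDC K v d k C ∧ C.ncard = Amax K v d k := by
  have h : {n | ∃ C : Set (Submodule K (Fin v → K)), IsCDC K v d k C ∧ C.ncard = n}.Nonempty :=
    ⟨0, ∅, by simp [IsCDC], by simp⟩
  exact Nat.sSup_mem h bddAbove_ncard_isCDC

end Amax

/-- Matrices of multiplication in an extension field form an MRD code of full rank distance. -/
lemma exists_linearIndependent_row_sub (K : Type) [Field K] [Fintype K] {k m : ℕ} (hk : 0 < k)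
    (hkm : k ≤ m) :
    ∃ R : Set (Matrix (Fin k) (Fin m) K), R.ncard = Fintype.card K ^ m ∧
      ∀ A ∈ R, ∀ B ∈ R, A ≠ B → LinearIndependent K (A - B).row := by
  obtain ⟨p, hp⟩ := CharP.exists K
  have : Fact p.Prime := ⟨CharP.char_is_prime K p⟩
  have : NeZero m := ⟨by omega⟩
  let L := FiniteField.Extension K p m
  let b : Basis (Fin m) K L := finBasisOfFinrankEq K L (FiniteField.finrank_extension K p m)
  let f : L → Matrix (Fin k) (Fin m) K := fun β => Matrix.of fun i =>
    b.equivFun (b (Fin.castLE hkm i) * β)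
  have hsub (β γ : L) : f β - f γ = f (β - γ) := by
    ext i j
    simp [f, mul_sub]
  have hf (β : L) (hβ : β ≠ 0) : LinearIndependent K (f β).row := by
    have h1 : LinearIndependent K (b ∘ Fin.castLE hkm) :=
      b.linearIndependent.comp _ (Fin.castLE_injective hkm)
    have h2 := h1.map' (b.equivFun.toLinearMap ∘ₗ LinearMap.mulRight K β) <| by
      rw [LinearMap.ker_eq_bot]
      exact b.equivFun.injective.comp (mul_left_injective₀ hβ)
    exact h2
  have hinj : Function.Injective f := by
    intro β γ h
    by_contra hne
    have h1 := hf _ (sub_ne_zero.2 hne)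
    rw [← hsub, h, sub_self] at h1
    exact h1.ne_zero ⟨0, hk⟩ rfl
  refine ⟨Set.range f, ?_, ?_⟩
  · rw [← Set.image_univ, Set.ncard_image_of_injective _ hinj, Set.ncard_univ,
      FiniteField.natCard_extension, Nat.card_eq_fintype_card]
  · rintro _ ⟨β, rfl⟩ _ ⟨γ, rfl⟩ hne
    rw [hsub]
    exact hf _ (sub_ne_zero.2 fun h => hne (h ▸ rfl))

section Lift

variable {K : Type} [Field K] {k v : ℕ}

lemma sum_smul_liftRow_of_lt (A : Matrix (Fin k) (Fin (v - k)) K) (c : Fin k → K) (i : Fin k)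
    (hi : (i : ℕ) < v) : (∑ l, c l • liftRow (v := v) A l) ⟨i, hi⟩ = c i := by
  simp [Finset.sum_apply, liftRow, Fin.val_inj]

lemma sum_smul_liftRow_add (A : Matrix (Fin k) (Fin (v - k)) K) (c : Fin k → K)
    (j : Fin (v - k)) (hj : k + j < v) :
    (∑ l, c l • liftRow (v := v) A l) ⟨k + j, hj⟩ = ∑ l, c l * A l j := by
  simp [Finset.sum_apply, liftRow]

lemma finrank_span_liftRow (hkv : k ≤ v) (A : Matrix (Fin k) (Fin (v - k)) K) :
    finrank K (Submodule.span K (Set.range (liftRow (v := v) A))) = k := by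
  have : LinearIndependent K (liftRow (v := v) A) := by
    refine Fintype.linearIndependent_iff.2 fun c hc i => ?_
    rw [← sum_smul_liftRow_of_lt A c i (i.2.trans_le hkv), hc]
    rfl
  simpa using finrank_span_eq_card this

lemma disjoint_span_liftRow (hkv : k ≤ v) {A B : Matrix (Fin k) (Fin (v - k)) K}
    (h : LinearIndependent K (A - B).row) :
    Disjoint (Submodule.span K (Set.range (liftRow (v := v) A)))
      (Submodule.span K (Set.range (liftRow (v := v) B))) := by
  refine Submodule.disjoint_def.2 fun x hA hB => ?_
  obtain ⟨c, rfl⟩ := Submodule.mem_span_range_iff_exists_fun K |>.1 hA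
  obtain ⟨c', hc'⟩ := Submodule.mem_span_range_iff_exists_fun K |>.1 hB
  obtain rfl : c' = c := by
    ext i
    rw [← sum_smul_liftRow_of_lt A c i (i.2.trans_le hkv), ← hc', sum_smul_liftRow_of_lt]
  have hc : ∀ i, c' i = 0 := by
    refine Fintype.linearIndependent_iff.1 h c' ?_
    ext j
    have := congrFun hc' ⟨k + j, by omega⟩
    rw [sum_smul_liftRow_add, sum_smul_liftRow_add] at this
    simp [Finset.sum_apply, mul_sub, Finset.sum_sub_distrib, this]
  simp [hc]

/-- Prepend `k` zero coordinates. -/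
def prependZeros (K : Type) [Field K] (k v : ℕ) : (Fin (v - k) → K) →ₗ[K] (Fin v → K) where
  toFun x j := if h : k ≤ (j : ℕ) then x ⟨j - k, by omega⟩ else 0
  map_add' x y := by
    ext j
    by_cases h : k ≤ (j : ℕ) <;> simp [h]
  map_smul' c x := by
    ext j
    by_cases h : k ≤ (j : ℕ) <;> simp [h]

lemma prependZeros_injective : Function.Injective (prependZeros K k v) := by
  intro x y h
  ext j
  simpa [prependZeros] using congrFun h ⟨k + j, by omega⟩

lemma disjoint_span_liftRow_map_prependZeros (hkv : k ≤ v)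
    (A : Matrix (Fin k) (Fin (v - k)) K) (W : Submodule K (Fin (v - k) → K)) :
    Disjoint (Submodule.span K (Set.range (liftRow (v := v) A)))
      (W.map (prependZeros K k v)) := by
  refine Submodule.disjoint_def.2 fun x hA hW => ?_
  obtain ⟨c, rfl⟩ := Submodule.mem_span_range_iff_exists_fun K |>.1 hA
  obtain ⟨y, -, hy⟩ := hW
  have hc (i : Fin k) : c i = 0 := by
    rw [← sum_smul_liftRow_of_lt A c i (i.2.trans_le hkv), ← hy]
    simp [prependZeros]
  simp [hc]

end Lift

/-- A lifted MRD code together with an optimal code in the special subspace. -/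
lemma exists_isCDC_isLMRD (K : Type) [Field K] [Fintype K] {k v : ℕ} (hk : 0 < k)
    (hv : 2 * k ≤ v) :
    ∃ C M : Set (Submodule K (Fin v → K)),
      IsCDC K v (2 * (k : ℤ)) k C ∧ IsLMRD (Fintype.card K) K v (2 * k) k M ∧ M ⊆ C ∧
      C.ncard = Fintype.card K ^ (v - k) + Amax K (v - k) (2 * (k : ℤ)) k := by
  obtain ⟨R, hRcard, hR⟩ := exists_linearIndependent_row_sub K (m := v - k) hk (by omega)
  obtain ⟨D, hD, hDcard⟩ := exists_isCDC_ncard_eq_Amax K (v - k) (2 * (k : ℤ)) k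
  rw [isCDC_iff_pairwise_disjoint] at hD
  have hkv : k ≤ v := by omega
  let lift (A : Matrix (Fin k) (Fin (v - k)) K) : Submodule K (Fin v → K) :=
    Submodule.span K (Set.range (liftRow A))
  let N := Submodule.map (prependZeros K k v) '' D
  have hlift (A) : finrank K (lift A) = k := finrank_span_liftRow hkv A
  have hne {U W : Submodule K (Fin v → K)} (hU : finrank K U = k) (h : Disjoint U W) :
      U ≠ W := by
    rintro rfl
    rw [disjoint_self.1 h, finrank_bot] at hU
    omega
  have hinj : Set.InjOn lift R := by
    intro A hA B hB h
    by_contra hAB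
    exact hne (hlift A) (disjoint_span_liftRow hkv (hR A hA B hB hAB)) h
  have hMN : ∀ U ∈ lift '' R, ∀ W ∈ N, Disjoint U W := by
    rintro _ ⟨A, -, rfl⟩ _ ⟨W, -, rfl⟩
    exact disjoint_span_liftRow_map_prependZeros hkv A W
  have hMrank : ∀ U ∈ lift '' R, finrank K U = k := by
    rintro _ ⟨A, -, rfl⟩
    exact hlift A
  refine ⟨lift '' R ∪ N, lift '' R, ?_, ⟨R, ?_, ?_, ?_⟩, Set.subset_union_left, ?_⟩
  · rw [isCDC_iff_pairwise_disjoint]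
    refine ⟨?_, ?_⟩
    · rintro U (hU | ⟨W, hW, rfl⟩)
      · exact hMrank U hU
      · exact (Submodule.equivMapOfInjective _ prependZeros_injective W).finrank_eq.symm.trans
          (hD.1 W hW)
    · rw [Set.pairwise_union_of_symm]
      refine ⟨?_, ?_, fun U hU W hW _ => hMN U hU W hW⟩
      · rintro _ ⟨A, hA, rfl⟩ _ ⟨B, hB, rfl⟩ h
        exact disjoint_span_liftRow hkv (hR A hA B hB fun hAB => h (hAB ▸ rfl))
      · rintro _ ⟨U, hU, rfl⟩ _ ⟨W, hW, rfl⟩ h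
        exact Submodule.disjoint_map prependZeros_injective
          (hD.2 hU hW fun hUW => h (hUW ▸ rfl))
  · rw [hRcard]
    congr 1
    rw [Nat.mul_div_cancel_left k two_pos]
    simp
  · intro A hA B hB hAB
    rw [(hR A hA B hB hAB).rank_matrix]
    simp
  · ext U
    simp [lift, eq_comm]
  · rw [Set.ncard_union_eq, hinj.ncard_image, hRcard,
      Set.ncard_image_of_injective _ (Submodule.map_injective_of_injective
        prependZeros_injective), hDcard]
    exact Set.disjoint_left.2 fun U hU hU' => hne (hMrank U hU) (hMN U hU U hU') rfl

/-- The optimal size of a code of disjoint `k`-subspaces in dimension `(t + 1) * k + r`. -/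
def spreadSize (q k r t : ℕ) : ℕ := 1 + ∑ i ∈ Finset.range t, q ^ ((i + 1) * k + r)

lemma spreadSize_succ (q k r t : ℕ) :
    spreadSize q k r (t + 1) = q ^ ((t + 1) * k + r) + spreadSize q k r t := by
  rw [spreadSize, Finset.sum_range_succ, spreadSize]
  ring

lemma spreadSize_mul (q k r t : ℕ) :
    (spreadSize q k r t - 1 : ℤ) * (q ^ k - 1) = q ^ ((t + 1) * k + r) - q ^ (k + r) := by
  induction t with
  | zero => simp [spreadSize]
  | succ t ih =>
    have : (q : ℤ) ^ ((t + 1 + 1) * k + r) = q ^ ((t + 1) * k + r) * q ^ k := by ring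
    rw [spreadSize_succ, this]
    push_cast
    linear_combination ih

lemma pow_dvd_spreadSize_sub_one (q k r t : ℕ) : (q : ℤ) ^ k ∣ spreadSize q k r t - 1 := by
  rw [spreadSize]
  push_cast
  rw [add_sub_cancel_left]
  exact Finset.dvd_sum fun i _ => pow_dvd_pow _ (by nlinarith)

lemma spreadSize_le_Amax (K : Type) [Field K] [Fintype K] {k : ℕ} (hk : 0 < k) (r t : ℕ) :
    spreadSize (Fintype.card K) k r t ≤ Amax K ((t + 1) * k + r) (2 * (k : ℤ)) k := by
  induction t with
  | zero =>
    obtain ⟨U, hU⟩ : ∃ U : Submodule K (Fin ((0 + 1) * k + r) → K), finrank K U = k := by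
      have h := (Pi.basisFun K (Fin ((0 + 1) * k + r))).linearIndependent.comp
        (Fin.castLE (by omega : k ≤ _)) (Fin.castLE_injective _)
      exact ⟨_, (finrank_span_eq_card h).trans (Fintype.card_fin k)⟩
    have : IsCDC K ((0 + 1) * k + r) (2 * (k : ℤ)) k {U} := by
      rw [isCDC_iff_pairwise_disjoint]
      simpa using hU
    simpa [spreadSize] using this.ncard_le_Amax
  | succ t ih =>
    obtain ⟨C, -, hC, -, -, hcard⟩ := exists_isCDC_isLMRD K (v := (t + 1 + 1) * k + r) hk
      (by nlinarith)
    have h : (t + 1 + 1) * k + r - k = (t + 1) * k + r := by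
      rw [Nat.sub_eq_iff_eq_add (by nlinarith)]
      ring
    rw [h] at hcard
    rw [spreadSize_succ]
    have := hC.ncard_le_Amax
    omega

/-- The Năstase–Sissokho bound for partial spreads. -/
lemma ncard_le_spreadSize {K : Type} [Field K] [Fintype K] {k r t : ℕ}
    (hspread : (Fintype.card K ^ r - 1) / (Fintype.card K - 1) < k)
    {C : Set (Submodule K (Fin ((t + 1) * k + r) → K))}
    (hC : IsCDC K ((t + 1) * k + r) (2 * (k : ℤ)) k C) :
    C.ncard ≤ spreadSize (Fintype.card K) k r t := by
  by_contra! hlt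
  rw [isCDC_iff_pairwise_disjoint] at hC
  obtain ⟨D, hDC, hD⟩ := Set.exists_subset_card_eq (Nat.succ_le_of_lt hlt)
  have := Fintype.ofFinite D
  have hdisj : Pairwise (Function.onFun Disjoint fun U : D => U.1) :=
    fun U W h => hC.2 (hDC U.2) (hDC W.2) fun h' => h (Subtype.ext h')
  have hrank (U : D) : finrank K U.1 = k := hC.1 _ (hDC U.2)
  have hcard : Fintype.card D = spreadSize (Fintype.card K) k r t + 1 := by
    rw [← Nat.card_eq_fintype_card, Nat.card_coe_set_eq, hD]
  have hsum := card_eq_holes_add_sum _ hdisj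
  have hbound := holes_bound ((Fintype.card K ^ r - 1) / (Fintype.card K - 1)) _ hdisj k
    (fun U => (hrank U).ge) (by simp; nlinarith)
    (by rw [hcard]
        push_cast
        convert! pow_dvd_spreadSize_sub_one (Fintype.card K) k r t using 1
        ring)
    hspread
  have hgeom : ((Fintype.card K : ℤ) - 1) *
      ((Fintype.card K ^ r - 1) / (Fintype.card K - 1) : ℕ) = (Fintype.card K : ℤ) ^ r - 1 := by
    have h1 : 1 ≤ Fintype.card K := Fintype.card_pos
    have h2 : Fintype.card K - 1 ∣ Fintype.card K ^ r - 1 := by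
      simpa using Nat.sub_dvd_pow_sub_pow (Fintype.card K) 1 r
    have h3 := Nat.mul_div_cancel' h2
    rw [← Nat.cast_one, ← Nat.cast_sub h1, ← Nat.cast_pow, ← Nat.cast_sub (Nat.one_le_pow _ _ h1)]
    exact_mod_cast h3
  have hmul := spreadSize_mul (Fintype.card K) k r t
  simp_rw [hrank] at hsum
  simp only [finrank_fin_fun, Finset.sum_const, Finset.card_univ, hcard, nsmul_eq_mul] at hsum
  rw [hgeom] at hbound
  push_cast at hsum
  rw [pow_add _ k r] at hmul
  linarith

/-- for `2 ≤ k`, `3k ≤ v`, `r ≡ v (mod k)`, `0 ≤ r < k` and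
`(q^r - 1)/(q - 1) < k` we have `A_q(v,2k;k) = q^(v-k) + A_q(v-k,2k;k)`, attained
by a CDC containing an LMRD. -/
theorem stmt13 (q : ℕ) (K : Type) [Field K] [Fintype K] (hq : Fintype.card K = q)
    (k v r : ℕ) (hk : 2 ≤ k) (hv : 3 * k ≤ v) (hr : r ≡ v [MOD k]) (hrk : r < k)
    (hspread : (q ^ r - 1) / (q - 1) < k) :
    Amax K v (2 * (k : ℤ)) (k : ℤ) = q ^ (v - k) + Amax K (v - k) (2 * (k : ℤ)) (k : ℤ) ∧
    ∃ C M : Set (Submodule K (Fin v → K)),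
      IsCDC K v (2 * (k : ℤ)) (k : ℤ) C ∧ IsLMRD q K v (2 * k) k M ∧ M ⊆ C ∧
      C.ncard = Amax K v (2 * (k : ℤ)) (k : ℤ) := by
  subst hq
  obtain ⟨t, rfl⟩ : ∃ t, v = (t + 1 + 1) * k + r := by
    have h1 : v % k = r := by rw [← hr, Nat.mod_eq_of_lt hrk]
    have h2 : 2 ≤ v / k := (Nat.le_div_iff_mul_le (by omega)).2 (by omega)
    refine ⟨v / k - 2, ?_⟩
    rw [show v / k - 2 + 1 + 1 = v / k by omega, ← h1, Nat.div_add_mod']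
  have hsub : (t + 1 + 1) * k + r - k = (t + 1) * k + r := by
    rw [Nat.sub_eq_iff_eq_add (by nlinarith)]
    ring
  obtain ⟨C, M, hC, hM, hMC, hcard⟩ := exists_isCDC_isLMRD K (v := (t + 1 + 1) * k + r)
    (by omega : 0 < k) (by omega)
  have hle := hC.ncard_le_Amax
  obtain ⟨D, hD, hDcard⟩ :=
    exists_isCDC_ncard_eq_Amax K ((t + 1 + 1) * k + r) (2 * (k : ℤ)) k
  have hub := ncard_le_spreadSize hspread hD
  have hlb := spreadSize_le_Amax K (by omega : 0 < k) r t
  rw [spreadSize_succ, hDcard] at hub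
  have heq : Amax K ((t + 1 + 1) * k + r) (2 * (k : ℤ)) k = C.ncard := by
    refine le_antisymm ?_ hle
    rw [hcard, hsub]
    omega
  exact ⟨heq.trans hcard, C, M, hC, hM, hMC, heq.symm⟩
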